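/- Fix an integer m ≥ 1 and t > 0. Then as p tends to infinity through the prime numbers, |tC_{mp}^eucl|_Rips converges to e^{−2t} + 2πt·Σ_r (1/r)·e^{−2t·cos(π/(2r))}·sin(π/(2r)), where the sum is over all odd divisors r of m. -/

import Mathlib

open scoped BigOperators Real

/-- The Rips magnitude function of a finite subset `A` of a metric space:
`|tA|_Rips = Σ_{∅ ≠ B ⊆ A} (−1)^{#B−1} e^{−diam(B)·t}`. -/
noncomputable def ripsMag {Y : Type*} [MetricSpace Y] (A : Finset Y) (t : ℝ) : ℝ :=
  ∑ B ∈ A.powerset.filter (fun B => B.Nonempty),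
    (-1 : ℝ) ^ (B.card - 1) * Real.exp (-(Metric.diam (B : Set Y)) * t)


/-- The Euclidean cycle `C_n^eucl`: `n` equally spaced points on the unit circle
in `ℝ² = ℂ`, with the Euclidean metric. -/
noncomputable def euclCycle (n : ℕ) : Finset ℂ :=
  (Finset.range n).image
    (fun k : ℕ => Complex.exp (2 * (π : ℂ) * (k : ℂ) / (n : ℂ) * Complex.I))

/-- `A` has no two points at cyclic distance more than `k`, where `n = 2 * k + s`. -/
def CyclicClique {n : ℕ} (k s : ℕ) (A : Finset (ZMod n)) : Prop :=
  ∀ x ∈ A, ∀ y ∈ A, ∀ j : ℕ, 1 ≤ j → j < s → x + k + j ≠ y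

/-- Going backwards from `a`, an antipode of a point of `A` is met before a point of `A`. -/
def IsRunStart {n : ℕ} (k : ℕ) (A : Finset (ZMod n)) (a : ZMod n) : Prop :=
  a ∈ A ∧ ∃ i : ℕ, a + k - i ∈ A ∧ ∀ j : ℕ, 1 ≤ j → j ≤ i → a - j ∉ A

/-- The run starts `a` of `A` for which adding or removing `a + 1` keeps `A` a clique. -/
def IsLooseStart {n : ℕ} (k s : ℕ) (A : Finset (ZMod n)) (a : ZMod n) : Prop :=
  IsRunStart k A a ∧ a + k + s ∉ A

section
variable {n k s : ℕ}

theorem natCast_two_mul_add_eq_zero (h : n = 2 * k + s) : (2 * k + s : ZMod n) = 0 := by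
  have : ((2 * k + s : ℕ) : ZMod n) = 0 := by rw [← h]; exact ZMod.natCast_self n
  exact_mod_cast this

theorem CyclicClique.mono {A B : Finset (ZMod n)} (hB : CyclicClique k s B) (h : A ⊆ B) :
    CyclicClique k s A :=
  fun x hx y hy => hB x (h hx) y (h hy)

theorem CyclicClique.add_succ_notMem {A : Finset (ZMod n)} (hA : CyclicClique k s A) (hs : 2 ≤ s)
    {a : ZMod n} (ha : a ∈ A) : a + 1 + k ∉ A := by
  intro h
  refine hA a ha _ h 1 le_rfl hs ?_
  push_cast; ring

theorem CyclicClique.insert_succ (h : n = 2 * k + s) {A : Finset (ZMod n)}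
    (hA : CyclicClique k s A) {a : ZMod n} (ha : a ∈ A) (has : a + k + s ∉ A) :
    CyclicClique k s (insert (a + 1) A) := by
  have h0 := natCast_two_mul_add_eq_zero h
  intro x hx y hy j hj hjs hxy
  rw [Finset.mem_insert] at hx hy
  rcases hx with rfl | hx <;> rcases hy with rfl | hy
  · exact hA a ha a ha j hj hjs (by linear_combination hxy)
  · rcases Nat.lt_or_ge (j + 1) s with h1 | h1
    · exact hA a ha y hy (j + 1) (by omega) h1 (by push_cast; linear_combination hxy)
    · obtain rfl : s = j + 1 := by omega
      apply has
      convert hy using 1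
      push_cast; linear_combination hxy
  · obtain ⟨i, rfl⟩ := Nat.exists_eq_add_of_le' hj
    rcases Nat.eq_zero_or_pos i with rfl | h1
    · apply has
      convert hx using 1
      push_cast at hxy; linear_combination h0 - hxy
    · exact hA x hx a ha i h1 (by omega) (by push_cast at hxy; linear_combination hxy)
  · exact hA x hx y hy j hj hjs hxy

theorem isRunStart_insert_succ_iff (h : n = 2 * k + s) (hs : 2 ≤ s) {A : Finset (ZMod n)}
    (hA : CyclicClique k s A) {a : ZMod n} (ha : a ∈ A) (has : a + k + s ∉ A)
    (y : ZMod n) :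
    IsRunStart k (insert (a + 1) A) y ↔ IsRunStart k A y := by
  have h0 := natCast_two_mul_add_eq_zero h
  have hC := hA.insert_succ h ha has
  have haC := Finset.mem_insert_of_mem (b := a + 1) ha
  constructor
  · rintro ⟨hy, i, hi, hj⟩
    have hya : y ≠ a + 1 := by
      rintro rfl
      rcases Nat.eq_zero_or_pos i with rfl | hpos
      · exact hC.add_succ_notMem hs haC (by simpa using hi)
      · exact hj 1 le_rfl hpos (by rwa [Nat.cast_one, add_sub_cancel_right])
    have hyA := Finset.mem_of_mem_insert_of_ne hy hya
    have hjA : ∀ j : ℕ, 1 ≤ j → j ≤ i → y - j ∉ A :=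
      fun j h1 h2 h3 => hj j h1 h2 (Finset.mem_insert_of_mem h3)
    refine ⟨hyA, ?_⟩
    rcases Finset.mem_insert.1 hi with hi | hi
    · refine ⟨i + 1, ?_, fun j h1 h2 => ?_⟩
      · convert ha using 1
        push_cast; linear_combination hi
      · rcases Nat.lt_or_ge i j with h3 | h3
        · obtain rfl : j = i + 1 := by omega
          convert has using 2
          push_cast; linear_combination hi - h0
        · exact hjA j h1 h3
    · exact ⟨i, hi, hjA⟩
  · rintro ⟨hy, i, hi, hj⟩
    refine ⟨Finset.mem_insert_of_mem hy, i, Finset.mem_insert_of_mem hi, fun j h1 h2 h3 => ?_⟩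
    rcases Finset.mem_insert.1 h3 with h3 | h3
    · rcases h2.lt_or_eq with h4 | rfl
      · refine hj (j + 1) (by omega) h4 ?_
        convert ha using 1
        push_cast; linear_combination h3
      · refine hA.add_succ_notMem hs ha ?_
        convert hi using 1
        linear_combination -h3
    · exact hj j h1 h2 h3

theorem isLooseStart_insert_succ_iff (h : n = 2 * k + s) (hs : 2 ≤ s) {A : Finset (ZMod n)}
    (hA : CyclicClique k s A) {a : ZMod n} (ha : a ∈ A) (has : a + k + s ∉ A)
    (y : ZMod n) :
    IsLooseStart k s (insert (a + 1) A) y ↔ IsLooseStart k s A y := by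
  have h0 := natCast_two_mul_add_eq_zero h
  unfold IsLooseStart
  rw [isRunStart_insert_succ_iff h hs hA ha has]
  refine and_congr_right fun hy => ?_
  rw [Finset.mem_insert, not_or, and_iff_right]
  intro hya
  refine hA.add_succ_notMem hs ha ?_
  convert hy.1 using 1
  linear_combination h0 - hya

theorem exists_isRunStart {A : Finset (ZMod n)} (hA : A.Nonempty) : ∃ a, IsRunStart k A a := by
  classical
  obtain ⟨b, hb⟩ := hA
  have hex : ∃ i : ℕ, b - k + i ∈ A := ⟨k, by simpa using hb⟩
  refine ⟨b - k + Nat.find hex, Nat.find_spec hex, Nat.find hex, by convert hb using 1; ring, ?_⟩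
  intro j h1 h2 h3
  refine Nat.find_min hex (m := Nat.find hex - j) (by omega) ?_
  rw [Nat.cast_sub h2]
  convert h3 using 1
  ring

theorem IsRunStart.add (h : n = 2 * k + s) {A : Finset (ZMod n)} {a : ZMod n}
    (ha : IsRunStart k A a) (has : a + k + s ∈ A) : IsRunStart k A (a + k + s) := by
  have h0 := natCast_two_mul_add_eq_zero h
  refine ⟨has, 0, ?_, by intro j h1 h2; omega⟩
  convert ha.1 using 1
  push_cast; linear_combination h0

/-- Toggling the membership of `x`. -/
def toggle {α : Type*} [DecidableEq α] (A : Finset α) (x : α) : Finset α :=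
  if x ∈ A then A.erase x else insert x A

theorem toggle_toggle {α : Type*} [DecidableEq α] (A : Finset α) (x : α) :
    toggle (toggle A x) x = A := by
  by_cases hx : x ∈ A <;> simp [toggle, hx]

theorem toggle_ne {α : Type*} [DecidableEq α] (A : Finset α) (x : α) : toggle A x ≠ A := by
  by_cases hx : x ∈ A <;> simp [toggle, hx]

theorem neg_one_pow_card_toggle {α : Type*} [DecidableEq α] (A : Finset α) (x : α) :
    (-1 : ℝ) ^ (toggle A x).card = -(-1) ^ A.card := by
  by_cases hx : x ∈ A
  · rw [← Finset.card_erase_add_one hx]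
    simp [toggle, hx, pow_succ]
  · simp [toggle, hx, pow_succ]

theorem toggle_succ_spec (h : n = 2 * k + s) (hs : 2 ≤ s) {A : Finset (ZMod n)}
    (hA : CyclicClique k s A) {a : ZMod n} (ha : IsLooseStart k s A a) :
    CyclicClique k s (toggle A (a + 1)) ∧ a ∈ toggle A (a + 1) ∧
      IsLooseStart k s (toggle A (a + 1)) = IsLooseStart k s A := by
  have hn : Fact (1 < n) := ⟨by omega⟩
  have ha1 : a ≠ a + 1 := by simp
  by_cases hx : a + 1 ∈ A
  · have haE : a ∈ A.erase (a + 1) := Finset.mem_erase.2 ⟨ha1, ha.1.1⟩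
    have hE : CyclicClique k s (A.erase (a + 1)) := hA.mono (Finset.erase_subset _ _)
    rw [toggle, if_pos hx]
    refine ⟨hE, haE, funext fun y => propext ?_⟩
    have := isLooseStart_insert_succ_iff h hs hE haE
      (fun h' => ha.2 (Finset.mem_of_mem_erase h')) y
    rw [← this, Finset.insert_erase hx]
  · rw [toggle, if_neg hx]
    exact ⟨hA.insert_succ h ha.1.1 ha.2, Finset.mem_insert_of_mem ha.1.1,
      funext fun y => propext (isLooseStart_insert_succ_iff h hs hA ha.1.1 ha.2 y)⟩

open Classical in
theorem sum_cyclicClique_eq_sum_rigid [NeZero n] (h : n = 2 * k + s) (hs : 2 ≤ s) :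
    ∑ A : Finset (ZMod n) with A.Nonempty ∧ CyclicClique k s A, (-1 : ℝ) ^ A.card =
      ∑ A : Finset (ZMod n) with A.Nonempty ∧ CyclicClique k s A ∧ ∀ a, ¬ IsLooseStart k s A a,
        (-1 : ℝ) ^ A.card := by
  rw [← Finset.sum_filter_add_sum_filter_not _ (fun A => ∀ a, ¬ IsLooseStart k s A a),
    Finset.filter_filter, Finset.filter_filter]
  simp only [and_assoc]
  rw [add_eq_left]
  have key : ∀ A ∈ (Finset.univ : Finset (Finset (ZMod n))).filter
      (fun A => A.Nonempty ∧ CyclicClique k s A ∧ ¬ ∀ a, ¬ IsLooseStart k s A a),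
      CyclicClique k s A ∧ IsLooseStart k s A (Classical.epsilon (IsLooseStart k s A)) := by
    intro A hA
    simp only [Finset.mem_filter, Finset.mem_univ, true_and, not_forall, not_not] at hA
    exact ⟨hA.2.1, Classical.epsilon_spec hA.2.2⟩
  refine Finset.sum_involution
    (fun A _ => toggle A (Classical.epsilon (IsLooseStart k s A) + 1)) ?_ ?_ ?_ ?_
  · intro A hA
    rw [neg_one_pow_card_toggle, add_neg_cancel]
  · intro A hA _
    exact toggle_ne _ _
  · intro A hA
    obtain ⟨h1, h2⟩ := key A hA
    obtain ⟨h3, h4, h5⟩ := toggle_succ_spec h hs h1 h2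
    simp only [Finset.mem_filter, Finset.mem_univ, true_and, not_forall, not_not]
    exact ⟨⟨_, h4⟩, h3, _, h5 ▸ h2⟩
  · intro A hA
    obtain ⟨h1, h2⟩ := key A hA
    obtain ⟨h3, h4, h5⟩ := toggle_succ_spec h hs h1 h2
    simp only [h5]
    exact toggle_toggle _ _

theorem add_mul_mem_of_rigid (h : n = 2 * k + s) {A : Finset (ZMod n)}
    (hrig : ∀ a, ¬ IsLooseStart k s A a) {a : ZMod n} (ha : IsRunStart k A a) (i : ℕ) :
    a + i * s ∈ A := by
  have h0 := natCast_two_mul_add_eq_zero h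
  have key : ∀ i : ℕ, IsRunStart k A (a + i * (k + s)) := by
    intro i
    induction i with
    | zero => simpa using ha
    | succ i ih =>
      have h1 : a + i * (k + s) + k + s ∈ A := by
        by_contra h2
        exact hrig _ ⟨ih, h2⟩
      convert ih.add h h1 using 1
      push_cast; ring
  convert (key (2 * i)).1 using 1
  push_cast; linear_combination -(i : ZMod n) * h0

theorem dvd_of_rigid (h : n = 2 * k + s) (hs : 0 < s) {A : Finset (ZMod n)} (hne : A.Nonempty)
    (hA : CyclicClique k s A) (hrig : ∀ a, ¬ IsLooseStart k s A a) : s ∣ k := by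
  obtain ⟨a, ha⟩ := exists_isRunStart (k := k) hne
  by_contra hk
  have h1 : 0 < k % s := Nat.pos_of_ne_zero fun h => hk (Nat.dvd_of_mod_eq_zero h)
  have h2 := Nat.mod_lt k hs
  have h3 : k + (s - k % s) = (k / s + 1) * s := by
    have := Nat.div_add_mod' k s
    rw [add_mul]; omega
  refine hA a ha.1 _ (add_mul_mem_of_rigid h hrig ha (k / s + 1)) (s - k % s) (by omega)
    (by omega) ?_
  rw [add_assoc]
  exact_mod_cast congrArg (fun v : ℕ => a + (v : ZMod n)) h3

theorem mem_iff_castHom_eq_of_rigid [NeZero n] (h : n = 2 * k + s) (hs : 0 < s) (hsn : s ∣ n)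
    (hsk : s ∣ k) {A : Finset (ZMod n)} (hA : CyclicClique k s A)
    (hrig : ∀ a, ¬ IsLooseStart k s A a) {a : ZMod n} (ha : IsRunStart k A a) (x : ZMod n) :
    x ∈ A ↔ ZMod.castHom hsn (ZMod s) x = ZMod.castHom hsn (ZMod s) a := by
  have hx : x = a + ((x - a).val : ℕ) := by simp
  obtain ⟨q, rfl⟩ := hsk
  set v := (x - a).val
  have hv := Nat.div_add_mod' v s
  constructor
  · intro hxA
    by_contra hne
    have h1 : 0 < v % s := by
      refine Nat.pos_of_ne_zero fun h1 => hne ?_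
      rw [hx, map_add, map_natCast, (ZMod.natCast_eq_zero_iff v s).2 (Nat.dvd_of_mod_eq_zero h1),
        add_zero]
    have h2 := Nat.mod_lt v hs
    refine hA x hxA _ (add_mul_mem_of_rigid h hrig ha (v / s + q + 1)) (s - v % s) (by omega)
      (by omega) ?_
    have h3 : v + s * q + (s - v % s) = (v / s + q + 1) * s := by
      have : (v / s + q + 1) * s = v / s * s + s * q + s := by ring
      omega
    rw [hx, add_assoc, add_assoc, ← add_assoc (v : ZMod n)]
    exact_mod_cast congrArg (fun w : ℕ => a + (w : ZMod n)) h3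
  · intro hc
    rw [← sub_eq_zero, ← map_sub] at hc
    have h1 : x - a = (v : ZMod n) := by simp [v]
    rw [h1, map_natCast, ZMod.natCast_eq_zero_iff] at hc
    obtain ⟨i, hi⟩ := hc
    rw [hx, hi]
    have := add_mul_mem_of_rigid h hrig ha i
    convert this using 2
    push_cast; ring

theorem rigid_fiber (hsn : s ∣ n) (hsk : s ∣ k)
    {A : Finset (ZMod n)} {c : ZMod s} (hA : ∀ x, x ∈ A ↔ ZMod.castHom hsn (ZMod s) x = c) :
    CyclicClique k s A ∧ ∀ a, ¬ IsLooseStart k s A a := by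
  have hk0 : (k : ZMod s) = 0 := (ZMod.natCast_eq_zero_iff _ _).2 hsk
  constructor
  · intro x hx y hy j hj hjs hxy
    rw [hA] at hx hy
    rw [← hxy, map_add, map_add, hx, map_natCast, map_natCast, hk0, add_zero, add_eq_left,
      ZMod.natCast_eq_zero_iff] at hy
    exact absurd (Nat.le_of_dvd hj hy) (by omega)
  · intro a ha
    refine ha.2 ((hA _).2 ?_)
    rw [map_add, map_add, (hA a).1 ha.1.1, map_natCast, map_natCast, hk0, ZMod.natCast_self]
    simp

theorem card_fiber_castHom [NeZero n] {l : ℕ} [NeZero s] (hl : n = s * l) (hsn : s ∣ n)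
    (c : ZMod s) :
    (Finset.univ.filter fun x : ZMod n => ZMod.castHom hsn (ZMod s) x = c).card = l := by
  have hsurj := ZMod.castHom_surjective hsn
  have h1 : ∀ d : ZMod s, (Finset.univ.filter
      fun x : ZMod n => ZMod.castHom hsn (ZMod s) x = d).card =
      (Finset.univ.filter fun x : ZMod n => ZMod.castHom hsn (ZMod s) x = c).card := fun d =>
    AddMonoidHom.card_fiber_eq_of_mem_range (ZMod.castHom hsn (ZMod s)) (hsurj d) (hsurj c)
  have h2 := Finset.card_eq_sum_card_fiberwise (s := (Finset.univ : Finset (ZMod n)))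
    (t := (Finset.univ : Finset (ZMod s))) (f := ZMod.castHom hsn (ZMod s)) (by simp)
  simp only [h1, Finset.sum_const, Finset.card_univ, ZMod.card, smul_eq_mul] at h2
  exact Nat.eq_of_mul_eq_mul_left (NeZero.pos s) (h2.symm.trans hl)

open Classical in
/-- The Euler characteristic, up to sign, of the clique complex of the graph on `ZMod n` joining
points at cyclic distance at most `k`. -/
theorem sum_cyclicClique [NeZero n] (h : n = 2 * k + s) (hs : 2 ≤ s) :
    ∑ A : Finset (ZMod n) with A.Nonempty ∧ CyclicClique k s A, (-1 : ℝ) ^ A.card =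
      if s ∣ k then -(s : ℝ) else 0 := by
  rw [sum_cyclicClique_eq_sum_rigid h hs]
  split_ifs with hsk
  · have hsn : s ∣ n := h ▸ (hsk.mul_left 2).add dvd_rfl
    have : NeZero s := ⟨by omega⟩
    obtain ⟨q, hq⟩ := id hsk
    have hcard := card_fiber_castHom (n := n) (s := s) (l := 2 * q + 1) (by rw [h, hq]; ring) hsn
    have hsurj := ZMod.castHom_surjective hsn
    have hmem : ∀ (c : ZMod s) (x : ZMod n),
        x ∈ (Finset.univ.filter fun x : ZMod n => ZMod.castHom hsn (ZMod s) x = c) ↔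
          ZMod.castHom hsn (ZMod s) x = c := fun c x => by
      rw [Finset.mem_filter, and_iff_right (Finset.mem_univ x)]
    have hsum : ∑ c : ZMod s, (-1 : ℝ) = -(s : ℝ) := by simp
    rw [← hsum]
    symm
    refine Finset.sum_bij (fun c _ => Finset.univ.filter
      fun x : ZMod n => ZMod.castHom hsn (ZMod s) x = c) ?_ ?_ ?_ ?_
    · intro c _
      obtain ⟨x, hx⟩ := hsurj c
      simp only [Finset.mem_filter, Finset.mem_univ, true_and]
      exact ⟨⟨x, (hmem c x).2 hx⟩, rigid_fiber hsn hsk (hmem c)⟩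
    · intro c _ d _ hcd
      obtain ⟨x, hx⟩ := hsurj c
      rw [← hx, ← hmem d x, ← hcd, hmem c x, hx]
    · intro A hA
      simp only [Finset.mem_filter, Finset.mem_univ, true_and] at hA
      obtain ⟨hne, hA, hrig⟩ := hA
      obtain ⟨a, ha⟩ := exists_isRunStart (k := k) hne
      refine ⟨ZMod.castHom hsn (ZMod s) a, Finset.mem_univ _, ?_⟩
      ext x
      rw [mem_iff_castHom_eq_of_rigid h (by omega) hsn hsk hA hrig ha, hmem]
    · intro c _
      rw [hcard, Odd.neg_one_pow ⟨q, rfl⟩]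
  · refine Finset.sum_eq_zero fun A hA => ?_
    simp only [Finset.mem_filter, Finset.mem_univ, true_and] at hA
    exact absurd (dvd_of_rigid h (by omega) hA.1 hA.2.1 hA.2.2) hsk

end

section
variable {n : ℕ}

/-- The diameter of a subset of `ZMod n` for the cyclic distance. -/
def cyclicDiam (B : Finset (ZMod n)) : ℕ :=
  (B ×ˢ B).sup fun p => (p.1 - p.2).valMinAbs.natAbs

theorem cyclicDiam_le_iff {B : Finset (ZMod n)} {k : ℕ} :
    cyclicDiam B ≤ k ↔ ∀ x ∈ B, ∀ y ∈ B, (y - x).valMinAbs.natAbs ≤ k := by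
  simp only [cyclicDiam, Finset.sup_le_iff, Finset.mem_product, Prod.forall, and_imp]
  exact ⟨fun h x hx y hy => h y x hy hx, fun h x y hx hy => h y hy x hx⟩

theorem cyclicDiam_le_half [NeZero n] (B : Finset (ZMod n)) : cyclicDiam B ≤ n / 2 :=
  cyclicDiam_le_iff.2 fun _ _ _ _ => ZMod.natAbs_valMinAbs_le _

theorem cyclicClique_iff_cyclicDiam_le [NeZero n] {k s : ℕ} (h : n = 2 * k + s)
    (B : Finset (ZMod n)) : CyclicClique k s B ↔ cyclicDiam B ≤ k := by
  rw [cyclicDiam_le_iff]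
  refine forall₄_congr fun x _ y _ => ?_
  rw [ZMod.valMinAbs_natAbs_eq_min]
  have hlt := (y - x).val_lt
  constructor
  · intro hj
    by_contra hk
    refine hj ((y - x).val - k) (by omega) (by omega) ?_
    rw [add_assoc, ← Nat.cast_add, Nat.add_sub_cancel' (by omega), ZMod.natCast_zmod_val]
    ring
  · intro hk j h1 h2 hxy
    have h3 : y - x = ((k + j : ℕ) : ZMod n) := by
      rw [← hxy]; push_cast; ring
    rw [h3, ZMod.val_cast_of_lt (by omega)] at hk
    omega

theorem dist_stdAddChar [NeZero n] (x y : ZMod n) :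
    dist (ZMod.stdAddChar x : ℂ) (ZMod.stdAddChar y) =
      2 * Real.sin (π * (x - y).valMinAbs.natAbs / n) := by
  set j := (x - y).valMinAbs with hj
  have hn : (0 : ℝ) < n := by exact_mod_cast NeZero.pos n
  have h1 : (ZMod.stdAddChar x : ℂ) = ZMod.stdAddChar y * ZMod.stdAddChar (x - y) := by
    rw [← AddChar.map_add_eq_mul, add_sub_cancel]
  have h2 : (ZMod.stdAddChar (x - y) : ℂ) =
      Complex.exp (Complex.I * ((2 * π * j / n : ℝ) : ℂ)) := by
    rw [← ZMod.coe_valMinAbs (x - y), ← hj, ZMod.stdAddChar_coe]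
    congr 1
    push_cast; ring
  have h3 : ‖(ZMod.stdAddChar y : ℂ)‖ = 1 := by
    rw [ZMod.stdAddChar_apply]; exact Circle.norm_coe _
  have h4 : ((j.natAbs : ℝ)) = |(j : ℝ)| := by rw [Nat.cast_natAbs, Int.cast_abs]
  have h5 : (j.natAbs : ℝ) ≤ n := by
    exact_mod_cast (ZMod.natAbs_valMinAbs_le (x - y)).trans (Nat.div_le_self n 2)
  have h6 : 0 ≤ Real.sin (π * j.natAbs / n) := by
    refine Real.sin_nonneg_of_nonneg_of_le_pi (by positivity) ?_
    rw [div_le_iff₀ hn]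
    exact mul_le_mul_of_nonneg_left h5 Real.pi_pos.le
  rw [dist_eq_norm, h1, ← mul_sub_one, norm_mul, h3, one_mul, h2,
    Complex.norm_exp_I_mul_ofReal_sub_one, norm_mul, Real.norm_two, Real.norm_eq_abs,
    ← abs_of_nonneg h6, h4]
  congr 1
  have h7 : 2 * π * (j : ℝ) / n / 2 = π * j / n := by ring
  rw [h7]
  rcases abs_cases (j : ℝ) with ⟨h, _⟩ | ⟨h, _⟩ <;> rw [h]
  rw [mul_neg, neg_div, Real.sin_neg, abs_neg]

theorem diam_image_stdAddChar [NeZero n] {B : Finset (ZMod n)} (hB : B.Nonempty) :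
    Metric.diam ((B.image fun x => (ZMod.stdAddChar x : ℂ) : Finset ℂ) : Set ℂ) =
      2 * Real.sin (π * cyclicDiam B / n) := by
  have hn : (0 : ℝ) < n := by exact_mod_cast NeZero.pos n
  have hhalf : (cyclicDiam B : ℝ) ≤ n / 2 :=
    (Nat.cast_le.2 (cyclicDiam_le_half B)).trans Nat.cast_div_le
  have hle : π * cyclicDiam B / n ≤ π / 2 := by
    rw [div_le_iff₀ hn]
    have := mul_le_mul_of_nonneg_left hhalf Real.pi_pos.le
    linarith
  have hsin : ∀ j : ℕ, j ≤ cyclicDiam B →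
      Real.sin (π * j / n) ≤ Real.sin (π * cyclicDiam B / n) := by
    intro j hj
    refine Real.sin_le_sin_of_le_of_le_pi_div_two ?_ hle ?_
    · have : 0 ≤ π * j / n := by positivity
      linarith [Real.pi_pos]
    · gcongr
  apply le_antisymm
  · refine Metric.diam_le_of_forall_dist_le ?_ ?_
    · have := hsin 0 (Nat.zero_le _)
      simp only [Nat.cast_zero, mul_zero, zero_div, Real.sin_zero] at this
      linarith
    · simp only [Finset.coe_image, Set.forall_mem_image, Finset.mem_coe]
      intro x hx y hy
      rw [dist_stdAddChar]
      exact mul_le_mul_of_nonneg_left (hsin _ (cyclicDiam_le_iff.1 le_rfl y hy x hx)) two_pos.le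
  · obtain ⟨⟨x, y⟩, hxy, h⟩ := Finset.exists_mem_eq_sup (B ×ˢ B) (hB.product hB)
      fun p => (p.1 - p.2).valMinAbs.natAbs
    rw [Finset.mem_product] at hxy
    rw [cyclicDiam, h, ← dist_stdAddChar]
    refine Metric.dist_le_diam_of_mem (Finset.finite_toSet _).isBounded ?_ ?_ <;>
      exact Finset.mem_coe.2 (Finset.mem_image_of_mem _ (by tauto))

theorem euclCycle_eq_image_stdAddChar [NeZero n] :
    euclCycle n = Finset.univ.image fun x : ZMod n => (ZMod.stdAddChar x : ℂ) := by
  have key : ∀ k : ℕ, (ZMod.stdAddChar (k : ZMod n) : ℂ) =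
      Complex.exp (2 * (π : ℂ) * (k : ℂ) / (n : ℂ) * Complex.I) := by
    intro k
    have := ZMod.stdAddChar_coe (N := n) k
    rw [Int.cast_natCast] at this
    rw [this]
    congr 1
    push_cast; ring
  ext z
  simp only [euclCycle, Finset.mem_image, Finset.mem_range, Finset.mem_univ, true_and]
  constructor
  · rintro ⟨k, _, rfl⟩
    exact ⟨k, key k⟩
  · rintro ⟨x, rfl⟩
    exact ⟨x.val, x.val_lt, by rw [← key, ZMod.natCast_zmod_val]⟩

theorem ripsMag_euclCycle_eq_sum [NeZero n] (t : ℝ) :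
    ripsMag (euclCycle n) t = ∑ B : Finset (ZMod n) with B.Nonempty,
      (-1 : ℝ) ^ (B.card - 1) * Real.exp (-2 * t * Real.sin (π * cyclicDiam B / n)) := by
  have hinj : Function.Injective fun x : ZMod n => (ZMod.stdAddChar x : ℂ) :=
    ZMod.injective_stdAddChar
  rw [ripsMag, euclCycle_eq_image_stdAddChar]
  symm
  refine Finset.sum_bij (fun B _ => B.image fun x => (ZMod.stdAddChar x : ℂ)) ?_ ?_ ?_ ?_
  · intro B hB
    simp only [Finset.mem_filter, Finset.mem_univ, true_and, Finset.mem_powerset] at hB ⊢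
    exact ⟨Finset.image_subset_image (Finset.subset_univ _), hB.image _⟩
  · intro B _ C _ h
    exact Finset.image_injective hinj h
  · intro C hC
    simp only [Finset.mem_filter, Finset.mem_powerset] at hC
    obtain ⟨B, _, rfl⟩ := Finset.subset_image_iff.1 hC.1
    exact ⟨B, by simpa using hC.2, rfl⟩
  · intro B hB
    simp only [Finset.mem_filter, Finset.mem_univ, true_and] at hB
    rw [Finset.card_image_of_injective _ hinj, diam_image_stdAddChar hB]
    congr 2
    ring

theorem eq_add_sum_range_ite (g : ℕ → ℝ) {d K : ℕ} (h : d ≤ K) :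
    g d = g K + ∑ k ∈ Finset.range K, if d ≤ k then g k - g (k + 1) else 0 := by
  induction K, h using Nat.le_induction with
  | base =>
    rw [Finset.sum_eq_zero, add_zero]
    intro k hk
    rw [if_neg (by simpa using hk)]
  | succ K hK ih =>
    rw [Finset.sum_range_succ, if_pos hK]
    linarith

theorem neg_one_pow_card_sub_one {α : Type*} {B : Finset α} (hB : B.Nonempty) :
    (-1 : ℝ) ^ (B.card - 1) = -(-1) ^ B.card := by
  obtain ⟨c, hc⟩ := Nat.exists_eq_add_of_lt hB.card_pos
  rw [hc]
  simp [pow_succ]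

theorem sum_nonempty_neg_one_pow_card {α : Type*} [Fintype α] [Nonempty α] :
    ∑ B : Finset α with B.Nonempty, (-1 : ℝ) ^ (B.card - 1) = 1 := by
  classical
  have h1 := Finset.sum_powerset_neg_one_pow_card_of_nonempty (Finset.univ_nonempty (α := α))
  rw [Finset.powerset_univ] at h1
  have h2 : ∑ B : Finset α, (-1 : ℝ) ^ B.card = 0 := by exact_mod_cast h1
  rw [← Finset.sum_filter_add_sum_filter_not _ Finset.Nonempty] at h2
  have h3 : (Finset.univ.filter fun B : Finset α => ¬ B.Nonempty) = {∅} := by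
    ext B; simp
  rw [h3, Finset.sum_singleton, Finset.card_empty, pow_zero] at h2
  rw [Finset.sum_congr rfl fun B hB => neg_one_pow_card_sub_one (Finset.mem_filter.1 hB).2,
    Finset.sum_neg_distrib]
  linarith

theorem ripsMag_euclCycle_eq_sum_range [NeZero n] (t : ℝ) :
    ripsMag (euclCycle n) t = Real.exp (-2 * t * Real.sin (π * (n / 2 : ℕ) / n)) +
      ∑ k ∈ Finset.range (n / 2), if n - 2 * k ∣ k then ((n - 2 * k : ℕ) : ℝ) *
        (Real.exp (-2 * t * Real.sin (π * k / n)) -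
          Real.exp (-2 * t * Real.sin (π * (k + 1 : ℕ) / n))) else 0 := by
  classical
  set g : ℕ → ℝ := fun k => Real.exp (-2 * t * Real.sin (π * k / n))
  have h1 : ∀ B : Finset (ZMod n), (-1 : ℝ) ^ (B.card - 1) * g (cyclicDiam B) =
      (-1) ^ (B.card - 1) * g (n / 2) + ∑ k ∈ Finset.range (n / 2),
        (if cyclicDiam B ≤ k then (-1) ^ (B.card - 1) else 0) * (g k - g (k + 1)) := by
    intro B
    rw [eq_add_sum_range_ite g (cyclicDiam_le_half B), mul_add, Finset.mul_sum]
    congr 1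
    refine Finset.sum_congr rfl fun k _ => ?_
    split_ifs <;> simp
  rw [ripsMag_euclCycle_eq_sum]
  change ∑ B : Finset (ZMod n) with B.Nonempty, (-1 : ℝ) ^ (B.card - 1) * g (cyclicDiam B) =
    g (n / 2) + ∑ k ∈ Finset.range (n / 2),
      if n - 2 * k ∣ k then ((n - 2 * k : ℕ) : ℝ) * (g k - g (k + 1)) else 0
  rw [Finset.sum_congr rfl fun B _ => h1 B, Finset.sum_add_distrib, ← Finset.sum_mul,
    sum_nonempty_neg_one_pow_card, one_mul, Finset.sum_comm]
  congr 1
  refine Finset.sum_congr rfl fun k hk => ?_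
  rw [Finset.mem_range] at hk
  have hn : n = 2 * k + (n - 2 * k) := by omega
  have h2 := sum_cyclicClique hn (by omega)
  rw [← Finset.sum_mul, ← Finset.sum_filter, Finset.filter_filter]
  simp only [cyclicClique_iff_cyclicDiam_le hn] at h2
  rw [Finset.sum_congr rfl fun B hB => neg_one_pow_card_sub_one (Finset.mem_filter.1 hB).2.1,
    Finset.sum_neg_distrib, h2]
  split_ifs <;> ring

/-- The Rips magnitude of the Euclidean cycle as a sum over the odd divisors of `n`. -/
theorem ripsMag_euclCycle_eq_sum_divisors [NeZero n] (t : ℝ) :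
    ripsMag (euclCycle n) t = Real.exp (-2 * t * Real.sin (π * (n / 2 : ℕ) / n)) +
      ∑ r ∈ n.divisors.filter (fun r => Odd r), (n / r : ℝ) *
        (Real.exp (-2 * t * Real.sin (π / 2 - π / (2 * r))) -
          Real.exp (-2 * t * Real.sin (π / 2 - π / (2 * r) + π / n))) := by
  have hn0 : n ≠ 0 := NeZero.ne n
  have hn : (n : ℝ) ≠ 0 := by exact_mod_cast hn0
  rw [ripsMag_euclCycle_eq_sum_range]
  congr 1
  set f : ℕ → ℝ := fun k => if n - 2 * k ∣ k then ((n - 2 * k : ℕ) : ℝ) *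
        (Real.exp (-2 * t * Real.sin (π * k / n)) -
          Real.exp (-2 * t * Real.sin (π * (k + 1 : ℕ) / n))) else 0 with hf
  have hext : ∑ k ∈ Finset.range (n / 2), f k = ∑ k ∈ Finset.range ((n + 1) / 2), f k := by
    rcases Nat.even_or_odd' n with ⟨c, hc | hc⟩
    · rw [show (n + 1) / 2 = n / 2 by omega]
    · rw [show (n + 1) / 2 = n / 2 + 1 by omega, Finset.sum_range_succ, left_eq_add, hf]
      have hsin : Real.sin (π * (n / 2 : ℕ) / n) = Real.sin (π * (n / 2 + 1 : ℕ) / n) := by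
        rw [← Real.sin_pi_sub]
        congr 1
        rw [show n / 2 = c by omega]
        have : (n : ℝ) = 2 * c + 1 := by exact_mod_cast hc
        field_simp
        rw [this]; push_cast; ring
      simp only [hsin, sub_self, mul_zero, ite_self]
  rw [hext, hf, ← Finset.sum_filter]
  refine Finset.sum_bij' (fun k _ => n / (n - 2 * k)) (fun r _ => (n - n / r) / 2) ?_ ?_ ?_ ?_ ?_
  · intro k hk
    simp only [Finset.mem_filter, Finset.mem_range, Nat.mem_divisors] at hk ⊢
    obtain ⟨hk, l, hl⟩ := hk
    have hs : 0 < n - 2 * k := by omega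
    have h1 : n = (n - 2 * k) * (2 * l + 1) := by
      rw [mul_add, mul_left_comm, ← hl]; omega
    have h2 : n / (n - 2 * k) = 2 * l + 1 := Nat.div_eq_of_eq_mul_right hs h1
    rw [h2]
    exact ⟨⟨⟨_, by rw [mul_comm]; exact h1⟩, hn0⟩, l, rfl⟩
  · intro r hr
    simp only [Finset.mem_filter, Finset.mem_range, Nat.mem_divisors] at hr ⊢
    obtain ⟨⟨⟨s, hs⟩, _⟩, l, rfl⟩ := hr
    have h1 : n / (2 * l + 1) = s := Nat.div_eq_of_eq_mul_right (by omega) hs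
    have hs0 : 0 < s := Nat.pos_of_ne_zero fun h => hn0 (by rw [hs, h, mul_zero])
    have h3 : n = 2 * (s * l) + s := by rw [hs]; ring
    have h2 : (n - s) / 2 = s * l := by omega
    have h4 : n - 2 * (s * l) = s := by omega
    rw [h1, h2, h4]
    exact ⟨by omega, l, rfl⟩
  · intro k hk
    simp only [Finset.mem_filter, Finset.mem_range] at hk
    obtain ⟨hk, l, hl⟩ := hk
    have hs : 0 < n - 2 * k := by omega
    have h1 : n = (2 * l + 1) * (n - 2 * k) := by
      rw [add_mul, mul_comm, mul_left_comm, ← hl]; omega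
    have h2 : n / (n / (n - 2 * k)) = n - 2 * k :=
      Nat.div_div_self ⟨_, by rw [mul_comm]; exact h1⟩ hn0
    rw [h2]
    omega
  · intro r hr
    simp only [Finset.mem_filter, Nat.mem_divisors] at hr
    obtain ⟨⟨⟨s, hs⟩, _⟩, l, rfl⟩ := hr
    have h1 : n / (2 * l + 1) = s := Nat.div_eq_of_eq_mul_right (by omega) hs
    have hs0 : 0 < s := Nat.pos_of_ne_zero fun h => hn0 (by rw [hs, h, mul_zero])
    have h3 : n = 2 * (s * l) + s := by rw [hs]; ring
    have h4 : n - 2 * ((n - s) / 2) = s := by omega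
    rw [h1, h4]
    exact Nat.div_eq_of_eq_mul_left hs0 hs
  · intro k hk
    simp only [Finset.mem_filter, Finset.mem_range] at hk
    obtain ⟨hk, l, hl⟩ := hk
    have hs : 0 < n - 2 * k := by omega
    have h1 : n = (n - 2 * k) * (2 * l + 1) := by
      rw [mul_add, mul_left_comm, ← hl]; omega
    have h2 : n / (n - 2 * k) = 2 * l + 1 := Nat.div_eq_of_eq_mul_right hs h1
    have h3 : (n : ℝ) = ((n - 2 * k : ℕ) : ℝ) * (2 * l + 1) := by exact_mod_cast h1
    have h4 : (n : ℝ) = 2 * k + ((n - 2 * k : ℕ) : ℝ) := by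
      have : n = 2 * k + (n - 2 * k) := by omega
      exact_mod_cast this
    have hl0 : (2 * l + 1 : ℝ) ≠ 0 := by positivity
    rw [h2]
    push_cast
    generalize ((n - 2 * k : ℕ) : ℝ) = s at h3 h4
    have h5 : (n : ℝ) / (2 * l + 1) = s := by rw [h3]; field_simp
    have h6 : π / 2 - π / (2 * (2 * l + 1)) = π * k / n := by
      have : (k : ℝ) = (n - s) / 2 := by rw [h4]; ring
      rw [this, ← h5]
      field_simp
    rw [h5, h6]
    congr 5
    ring
end

open Filter Topology

theorem sum_odd_divisors_mul_prime {m p : ℕ} (hp : p.Prime) (hmp : m < p)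
    (hp2 : 2 < p) (f : ℕ → ℝ) :
    ∑ r ∈ (m * p).divisors.filter (fun r => Odd r), f r =
      ∑ r ∈ m.divisors.filter (fun r => Odd r), f r +
        ∑ r ∈ m.divisors.filter (fun r => Odd r), f (r * p) := by
  classical
  have hodd : Odd p := hp.odd_of_ne_two (by omega)
  have hinj : Function.Injective fun r : ℕ => r * p :=
    fun a b h => Nat.eq_of_mul_eq_mul_right hp.pos h
  have hdisj : Disjoint (m.divisors.filter fun r => Odd r)
      ((m.divisors.filter fun r => Odd r).image fun r => r * p) := by
    rw [Finset.disjoint_left]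
    intro r hr hr'
    obtain ⟨q, hq, rfl⟩ := Finset.mem_image.1 hr'
    have h1 := Nat.divisor_le (Finset.mem_filter.1 hr).1
    have h2 := Nat.pos_of_mem_divisors (Finset.mem_filter.1 hq).1
    have h3 := Nat.le_mul_of_pos_left p h2
    omega
  have hunion : (m * p).divisors.filter (fun r => Odd r) =
      (m.divisors.filter fun r => Odd r) ∪
        (m.divisors.filter fun r => Odd r).image fun r => r * p := by
    ext r
    simp only [Nat.divisors_mul, hp.divisors, Finset.mem_filter, Finset.mem_mul,
      Finset.mem_insert, Finset.mem_singleton, Finset.mem_union, Finset.mem_image]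
    constructor
    · rintro ⟨⟨q, hq, x, rfl | rfl, rfl⟩, hr⟩
      · left; simpa [hq] using hr
      · right; exact ⟨q, ⟨hq, (Nat.odd_mul.1 hr).1⟩, rfl⟩
    · rintro (⟨hr, ho⟩ | ⟨q, ⟨hq, ho⟩, rfl⟩)
      · exact ⟨⟨r, hr, 1, Or.inl rfl, mul_one r⟩, ho⟩
      · exact ⟨⟨q, hq, p, Or.inr rfl, rfl⟩, ho.mul hodd⟩
  rw [hunion, Finset.sum_union hdisj, Finset.sum_image hinj.injOn]

theorem tendsto_half_div_self :
    Tendsto (fun n : ℕ => ((n / 2 : ℕ) : ℝ) / n) atTop (𝓝 (1 / 2)) := by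
  have h := (tendsto_nat_floor_mul_div_atTop (R := ℝ) (a := 1 / 2) (by norm_num)).comp
    tendsto_natCast_atTop_atTop
  refine h.congr fun n => ?_
  simp only [Function.comp_apply]
  congr 2
  rw [one_div_mul_eq_div]
  exact_mod_cast Nat.floor_div_natCast (n : ℝ) 2 |>.trans (by simp)

theorem tendsto_exp_sin_half (t : ℝ) :
    Tendsto (fun n : ℕ => Real.exp (-2 * t * Real.sin (π * (n / 2 : ℕ) / n))) atTop
      (𝓝 (Real.exp (-2 * t))) := by
  have hc : Continuous fun x : ℝ => Real.exp (-2 * t * Real.sin (π * x)) := by fun_prop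
  have h := (hc.tendsto (1 / 2)).comp tendsto_half_div_self
  rw [mul_one_div, Real.sin_pi_div_two, mul_one] at h
  refine h.congr fun n => ?_
  simp only [Function.comp_apply, mul_div_assoc]

theorem tendsto_mul_exp_sin_sub (t θ c : ℝ) :
    Tendsto (fun n : ℕ => (n / c : ℝ) * (Real.exp (-2 * t * Real.sin θ) -
        Real.exp (-2 * t * Real.sin (θ + π / n)))) atTop
      (𝓝 (2 * π * t * (1 / c * Real.exp (-2 * t * Real.sin θ) * Real.cos θ))) := by
  have hd : HasDerivAt (fun x => Real.exp (-2 * t * Real.sin x))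
      (Real.exp (-2 * t * Real.sin θ) * (-2 * t * Real.cos θ)) θ :=
    ((Real.hasDerivAt_sin θ).const_mul (-2 * t)).exp
  have hn : Tendsto (fun n : ℕ => π / (n : ℝ)) atTop (𝓝[≠] 0) := by
    refine tendsto_nhdsWithin_iff.2 ⟨tendsto_const_div_atTop_nhds_zero_nat π, ?_⟩
    filter_upwards [eventually_gt_atTop 0] with n hn
    have : (0 : ℝ) < n := by exact_mod_cast hn
    exact (div_pos Real.pi_pos this).ne'
  have h := (hd.tendsto_slope_zero.comp hn).const_mul (-(π / c))
  convert h.congr' ?_ using 2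
  · ring
  · filter_upwards [eventually_gt_atTop 0] with n hn
    have hn' : (n : ℝ) ≠ 0 := by exact_mod_cast hn.ne'
    have hπ := Real.pi_ne_zero
    simp only [Function.comp_apply, smul_eq_mul, inv_div]
    have : -(π / c) * ((n : ℝ) / π) = -(n / c) := by field_simp
    rw [← mul_assoc, this]
    ring

theorem tendsto_exp_sin_sub_vanishing (t : ℝ) {m r : ℕ} (hm : 0 < m) (hr : 0 < r) :
    Tendsto (fun p : ℕ => ((m * p : ℕ) / (r * p : ℕ) : ℝ) *
        (Real.exp (-2 * t * Real.sin (π / 2 - π / (2 * (r * p : ℕ)))) -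
          Real.exp (-2 * t * Real.sin (π / 2 - π / (2 * (r * p : ℕ)) + π / (m * p : ℕ)))))
      atTop (𝓝 0) := by
  have h0 : ∀ c : ℕ, 0 < c → Tendsto (fun p : ℕ => π / ((c * p : ℕ) : ℝ)) atTop (𝓝 0) :=
    fun c hc => (tendsto_const_div_atTop_nhds_zero_nat π).comp
      (tendsto_id.const_mul_atTop' hc)
  have h1 : Tendsto (fun p : ℕ => π / 2 - π / (2 * (r * p : ℕ))) atTop (𝓝 (π / 2)) := by
    have := (h0 (2 * r) (by omega)).const_sub (π / 2)
    rw [sub_zero] at this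
    refine this.congr fun p => ?_
    push_cast; ring_nf
  have h2 := h1.add (h0 m hm)
  rw [add_zero] at h2
  have hc : Continuous fun x : ℝ => Real.exp (-2 * t * Real.sin x) := by fun_prop
  have h3 := (((hc.tendsto _).comp h1).sub ((hc.tendsto _).comp h2)).const_mul ((m : ℝ) / r)
  rw [sub_self, mul_zero] at h3
  refine h3.congr' ?_
  filter_upwards [eventually_gt_atTop 0] with p hp
  have hp' : (p : ℝ) ≠ 0 := by exact_mod_cast hp.ne'
  have : ((m * p : ℕ) / (r * p : ℕ) : ℝ) = m / r := by
    push_cast; exact mul_div_mul_right _ _ hp'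
  rw [this]
  rfl

/-- for fixed `m ≥ 1` and `t > 0`, as `p → ∞` through the primes,
`|tC_{mp}^eucl|_Rips → e^{−2t} + 2πt Σ_{odd r ∣ m} (1/r) e^{−2t cos(π/(2r))} sin(π/(2r))`. -/
theorem ripsMag_euclCycle_tendsto_primes (m : ℕ) (hm : 1 ≤ m) (t : ℝ) (ht : 0 < t) :
    Filter.Tendsto (fun p : ℕ => ripsMag (euclCycle (m * p)) t)
      (Filter.atTop ⊓ Filter.principal {p : ℕ | p.Prime})
      (nhds (Real.exp (-2 * t) + 2 * π * t *
        ∑ r ∈ m.divisors.filter (fun r => Odd r),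
          (1 / (r : ℝ)) * Real.exp (-2 * t * Real.cos (π / (2 * (r : ℝ)))) *
            Real.sin (π / (2 * (r : ℝ))))) := by
  rw [Finset.mul_sum]
  have hmp : Tendsto (fun p : ℕ => m * p) atTop atTop := tendsto_id.const_mul_atTop' hm
  have hmain : ∀ r ∈ m.divisors.filter (fun r => Odd r),
      Tendsto (fun p : ℕ => ((m * p : ℕ) / r : ℝ) *
        (Real.exp (-2 * t * Real.sin (π / 2 - π / (2 * r))) -
          Real.exp (-2 * t * Real.sin (π / 2 - π / (2 * r) + π / (m * p : ℕ))))) atTop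
        (𝓝 (2 * π * t * ((1 / (r : ℝ)) * Real.exp (-2 * t * Real.cos (π / (2 * (r : ℝ)))) *
            Real.sin (π / (2 * (r : ℝ)))))) := by
    intro r _
    have h := (tendsto_mul_exp_sin_sub t (π / 2 - π / (2 * r)) r).comp hmp
    rw [Real.cos_pi_div_two_sub] at h
    rw [← Real.sin_pi_div_two_sub (π / (2 * r))]
    exact h
  have hvan := fun r (hr : r ∈ m.divisors.filter (fun r => Odd r)) =>
    tendsto_exp_sin_sub_vanishing t hm (Nat.pos_of_mem_divisors (Finset.mem_filter.1 hr).1)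
  have h := ((tendsto_exp_sin_half t).comp hmp).add
    ((tendsto_finsetSum _ hmain).add (tendsto_finsetSum _ hvan))
  rw [Finset.sum_const_zero, add_zero] at h
  refine (h.mono_left inf_le_left).congr' ?_
  filter_upwards [mem_inf_of_left (eventually_gt_atTop m),
    mem_inf_of_left (eventually_gt_atTop 2), mem_inf_of_right (mem_principal_self _)]
    with p hpm hp2 hp
  have : NeZero (m * p) := ⟨(Nat.mul_pos hm (by omega)).ne'⟩
  rw [ripsMag_euclCycle_eq_sum_divisors, sum_odd_divisors_mul_prime hp hpm hp2]
  rfl
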